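/- arXiv:2004.07421 — 2 statements merged into one kernel-verified Lean document; each statement's English description precedes it below -/
import Mathlib

section
/- Let Ω ⊂ ℂⁿ be a bounded convex domain. Then for every x ∈ Ω and every v ∈ ℂⁿ\{0}, the Kobayashi metric satisfies |v|/(2 δ_Ω(x;v)) ≤ k_Ω(x;v) ≤ |v|/δ_Ω(x;v). -/
open Metric Set MeasureTheory Filter Topology

noncomputable section

variable {E : Type*} [NormedAddCommGroup E] [NormedSpace ℂ E]

/-- Distance from `x` to the boundary of `D`. -/
def bdist (D : Set E) (x : E) : ℝ := Metric.infDist x (frontier D)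

/-- Distance from `x` to the boundary of `D` along the complex line `x + ℂ v`. -/
def bdistDir (D : Set E) (x v : E) : ℝ :=
  Metric.infDist x (frontier D ∩ {w | ∃ c : ℂ, w = x + c • v})

/-- The infinitesimal Kobayashi (pseudo-)metric of `D ⊆ E`. -/
def kobMetric (D : Set E) (x v : E) : ℝ :=
  sInf { r : ℝ | ∃ (f : ℂ → E) (ξ : ℂ),
    DifferentiableOn ℂ f (ball (0:ℂ) 1) ∧ MapsTo f (ball (0:ℂ) 1) D ∧
    f 0 = x ∧ ξ • derivWithin f (ball (0:ℂ) 1) 0 = v ∧ r = ‖ξ‖ }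

/-- `σ` is absolutely continuous on `[a,b]`, with a.e. derivative `g`. -/
def IsACWithDeriv (σ g : ℝ → E) (a b : ℝ) : Prop :=
  IntervalIntegrable g volume a b ∧
  ∀ t ∈ Icc a b, σ t = σ a + ∫ s in a..t, g s

/-- The Kobayashi pseudo-distance of `D`, defined via lengths of absolutely
continuous curves (Venturini's description). -/
def kobDist (D : Set E) (x y : E) : ℝ :=
  sInf { r : ℝ | ∃ (a b : ℝ) (σ g : ℝ → E), a ≤ b ∧
    IsACWithDeriv σ g a b ∧ MapsTo σ (Icc a b) D ∧ σ a = x ∧ σ b = y ∧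
    r = ∫ t in a..b, kobMetric D (σ t) (g t) }

/-- Log-type convex domain, with explicit constants `C, ν > 0`. -/
def LogTypeConvexWith (D : Set E) (C ν : ℝ) : Prop :=
  IsOpen D ∧ D.Nonempty ∧ Bornology.IsBounded D ∧ Convex ℝ D ∧ 0 < C ∧ 0 < ν ∧
  ∀ z ∈ D, ∀ v : E, v ≠ 0 →
    bdistDir D z v ≤ C / |Real.log (bdist D z)| ^ (1 + ν)

/-- Log-type convex domain. -/
def LogTypeConvex (D : Set E) : Prop := ∃ C ν : ℝ, LogTypeConvexWith D C ν

/-- A `ℂ`-convex set: every nonempty intersection with a complex affine line is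
connected and simply connected. -/
def CConvex (D : Set E) : Prop :=
  ∀ z v : E, v ≠ 0 → (D ∩ {w | ∃ c : ℂ, w = z + c • v}).Nonempty →
    IsConnected (D ∩ {w | ∃ c : ℂ, w = z + c • v}) ∧
    SimplyConnectedSpace ↥(D ∩ {w | ∃ c : ℂ, w = z + c • v})

/-- Log-type `ℂ`-convex domain. -/
def LogTypeCConvex (D : Set E) : Prop :=
  IsOpen D ∧ D.Nonempty ∧ Bornology.IsBounded D ∧ CConvex D ∧
  ∃ C ν : ℝ, 0 < C ∧ 0 < ν ∧
    ∀ z ∈ D, ∀ v : E, v ≠ 0 →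
      bdistDir D z v ≤ C / |Real.log (bdist D z)| ^ (1 + ν)

/-- `σ : [a,b] → D` (with a.e. derivative `g`) is a `(λ,κ)`-almost geodesic for the
Kobayashi distance of `D`. -/
def AlmostGeodesicOn (D : Set E) (lam kap : ℝ) (σ g : ℝ → E) (a b : ℝ) : Prop :=
  MapsTo σ (Icc a b) D ∧ IsACWithDeriv σ g a b ∧
  (∀ s ∈ Icc a b, ∀ t ∈ Icc a b,
    (1 / lam) * |t - s| - kap ≤ kobDist D (σ s) (σ t) ∧
    kobDist D (σ s) (σ t) ≤ lam * |t - s| + kap) ∧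
  (∀ᵐ t ∂volume, t ∈ Icc a b → kobMetric D (σ t) (g t) ≤ lam)

/-- `σ : [a,b] → D` is a `C`-rough geodesic for the Kobayashi distance of `D`. -/
def RoughGeodesicOn (D : Set E) (C : ℝ) (σ : ℝ → E) (a b : ℝ) : Prop :=
  MapsTo σ (Icc a b) D ∧
  ∀ s ∈ Icc a b, ∀ t ∈ Icc a b,
    |t - s| - C ≤ kobDist D (σ s) (σ t) ∧ kobDist D (σ s) (σ t) ≤ |t - s| + C

/-- `ρ` is a `C¹` local defining function for `D` near `ξ` on the open set `W`. -/
def IsLocalDefiningFn (D : Set E) (ξ : E) (W : Set E) (ρ : E → ℝ) : Prop :=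
  IsOpen W ∧ ξ ∈ W ∧ ContDiffOn ℝ 1 ρ W ∧ (∀ x ∈ W, fderiv ℝ ρ x ≠ 0) ∧
  D ∩ W = {x ∈ W | ρ x < 0} ∧ frontier D ∩ W = {x ∈ W | ρ x = 0}

/-- `ξ` is a Dini-smooth boundary point of `D`: the boundary is `C¹` near `ξ` and the
unit normal admits a modulus of continuity `ω` satisfying the Dini condition. -/
def DiniSmoothBoundaryPoint (D : Set E) (ξ : E) : Prop :=
  ∃ (W : Set E) (ρ : E → ℝ) (ω : ℝ → ℝ),
    IsLocalDefiningFn D ξ W ρ ∧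
    (∀ t ∈ Icc (0:ℝ) 1, 0 ≤ ω t) ∧ MonotoneOn ω (Icc (0:ℝ) 1) ∧
    IntegrableOn (fun t => ω t / t) (Ioc (0:ℝ) 1) ∧
    ∀ x ∈ frontier D ∩ W, ∀ y ∈ frontier D ∩ W, ‖x - y‖ ≤ 1 →
      ‖(‖fderiv ℝ ρ x‖)⁻¹ • fderiv ℝ ρ x - (‖fderiv ℝ ρ y‖)⁻¹ • fderiv ℝ ρ y‖ ≤ ω ‖x - y‖

/-- `D` has `C^{1,ε}` boundary: near every boundary point there is a `C¹` defining
function whose differential is `ε`-Hölder. -/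
def HolderC1Boundary (D : Set E) (ε : ℝ) : Prop :=
  ∀ ξ ∈ frontier D, ∃ (W : Set E) (ρ : E → ℝ) (M : ℝ), 0 < M ∧
    IsLocalDefiningFn D ξ W ρ ∧
    ∀ x ∈ W, ∀ y ∈ W, ‖fderiv ℝ ρ x - fderiv ℝ ρ y‖ ≤ M * ‖x - y‖ ^ ε

/-- The complex affine tangent hyperplane of `∂D` at `x`, computed from a local
defining function `ρ`. -/
def complexTangentHyperplane (ρ : E → ℝ) (x : E) : Set E :=
  {w : E | fderiv ℝ ρ x (w - x) = 0 ∧ fderiv ℝ ρ x ((Complex.I : ℂ) • (w - x)) = 0}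

/-- The Gromov product of `x` and `y` with respect to the base point `o`, for the
Kobayashi distance of `D`. -/
def gromovProd (D : Set E) (o x y : E) : ℝ :=
  (kobDist D x o + kobDist D o y - kobDist D x y) / 2

end

/-!
Everything happens on the complex line through `x` in direction `v`. The disc of radius `δ_Ω(x;v)`
in that line is contained in `Ω`, and its affine parametrization gives the upper bound. For the
lower bound, separate a boundary point of `Ω` on that line from `Ω` by a complex linear functional:
it carries a holomorphic disc in `Ω` to a holomorphic map into a half plane, to which the Schwarz
lemma applies. The factor `2` is lost by replacing `Ω` with the half plane.
-/

theorem subset_of_isPreconnected_of_disjoint_frontier {X : Type*} [TopologicalSpace X]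
    {s D : Set X} (hs : IsPreconnected s) (hsD : (s ∩ D).Nonempty)
    (hdisj : Disjoint s (frontier D)) : s ⊆ D := by
  have hcover : s ⊆ interior D ∪ interior Dᶜ := by
    rw [← compl_frontier_eq_union_interior]
    exact hdisj.subset_compl_right
  have hmeets : (s ∩ interior D).Nonempty := by
    obtain ⟨x, hxs, hxD⟩ := hsD
    exact ⟨x, hxs, (hcover hxs).resolve_right fun h => interior_subset h hxD⟩
  have hinterior : Disjoint (interior D) (interior Dᶜ) :=
    disjoint_compl_right.mono interior_subset interior_subset
  exact (hs.subset_left_of_subset_union isOpen_interior isOpen_interior hinterior hcover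
    hmeets).trans interior_subset

theorem norm_sub_le_norm_add_conj {a b : ℂ} (h : 0 ≤ a.re * b.re) :
    ‖a - b‖ ≤ ‖a + (starRingEnd ℂ) b‖ := by
  rw [← sq_le_sq₀ (norm_nonneg _) (norm_nonneg _), Complex.sq_norm, Complex.sq_norm]
  calc Complex.normSq (a - b)
      ≤ Complex.normSq (a - b) + 4 * (a.re * b.re) := by linarith
    _ = Complex.normSq (a + (starRingEnd ℂ) b) := by
      simp only [Complex.normSq_apply, Complex.add_re, Complex.add_im, Complex.sub_re,
        Complex.sub_im, Complex.conj_re, Complex.conj_im]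
      ring

theorem norm_deriv_le_of_re_neg {h : ℂ → ℂ} {z : ℂ} {R : ℝ} (hR : 0 < R)
    (hd : DifferentiableOn ℂ h (ball z R)) (hre : ∀ w ∈ ball z R, (h w).re < 0) :
    ‖deriv h z‖ ≤ 2 * |(h z).re| / R := by
  have hz : z ∈ ball z R := mem_ball_self hR
  set b := h z
  have hb : b + (starRingEnd ℂ) b = (2 * b.re : ℝ) := Complex.add_conj b
  have hden : ∀ w ∈ ball z R, h w + (starRingEnd ℂ) b ≠ 0 := by
    intro w hw h0
    have hre0 : (h w).re + b.re = 0 := by simpa using congrArg Complex.re h0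
    linarith [hre w hw, hre z hz]
  -- The Cayley transform of the left half plane that sends `b` to `0`, composed with `h`.
  let φ : ℂ → ℂ := fun w => (h w - b) / (h w + (starRingEnd ℂ) b)
  have hφd : DifferentiableOn ℂ φ (ball z R) := (hd.sub_const _).div (hd.add_const _) hden
  have hφz : φ z = 0 := by simp [φ, b]
  have hφm : MapsTo φ (ball z R) (closedBall (φ z) 1) := by
    intro w hw
    rw [hφz, mem_closedBall_zero_iff, norm_div]
    exact div_le_one_of_le₀
      (norm_sub_le_norm_add_conj (mul_pos_of_neg_of_neg (hre w hw) (hre z hz)).le) (norm_nonneg _)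
  have hφ' : deriv φ z = deriv h z / (2 * b.re : ℝ) := by
    have hh := (hd.differentiableAt (isOpen_ball.mem_nhds hz)).hasDerivAt
    refine ((hh.sub_const b).div (hh.add_const _) (hden z hz)).deriv.trans ?_
    rw [sub_self, zero_mul, sub_zero, sq, mul_div_mul_right _ _ (hden z hz), hb]
  have hschwarz : ‖deriv h z‖ / (2 * |b.re|) ≤ 1 / R := by
    simpa [hφ'] using Complex.norm_deriv_le_div_of_mapsTo_ball hφd hφm hR
  have hbpos : 0 < 2 * |b.re| := mul_pos two_pos (abs_pos.2 (hre z hz).ne)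
  calc ‖deriv h z‖ ≤ 1 / R * (2 * |b.re|) := (div_le_iff₀ hbpos).1 hschwarz
    _ = 2 * |b.re| / R := by ring

section

variable {E : Type*} [NormedAddCommGroup E] [NormedSpace ℂ E] {D : Set E} {x v : E}

theorem le_two_mul_norm_of_add_smul_deriv_notMem (hDo : IsOpen D) (hDc : Convex ℝ D)
    {f : ℂ → E} {z c : ℂ} {R : ℝ} (hR : 0 < R) (hf : DifferentiableOn ℂ f (ball z R))
    (hfD : MapsTo f (ball z R) D) (hc : f z + c • deriv f z ∉ D) : R ≤ 2 * ‖c‖ := by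
  have hz : z ∈ ball z R := mem_ball_self hR
  obtain ⟨L, hL⟩ := RCLike.geometric_hahn_banach_open_point (𝕜 := ℂ) hDc hDo hc
  let h : ℂ → ℂ := fun w => L (f w) - L (f z + c • deriv f z)
  have hre : ∀ w ∈ ball z R, (h w).re < 0 := fun w hw => by
    simpa [h] using hL _ (hfD hw)
  have hd : DifferentiableOn ℂ h (ball z R) :=
    (L.differentiable.comp_differentiableOn hf).sub_const _
  have hh' : deriv h z = L (deriv f z) :=
    ((L.hasFDerivAt.comp_hasDerivAt z
      (hf.differentiableAt (isOpen_ball.mem_nhds hz)).hasDerivAt).sub_const _).deriv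
  have hhz : h z = -(c * L (deriv f z)) := by simp [h]
  have hLpos : 0 < ‖L (deriv f z)‖ := by
    refine norm_pos_iff.2 fun h0 => (hre z hz).ne ?_
    rw [hhz, h0, mul_zero, neg_zero, Complex.zero_re]
  have hschwarz : R * ‖L (deriv f z)‖ ≤ 2 * ‖c‖ * ‖L (deriv f z)‖ := calc
    R * ‖L (deriv f z)‖ ≤ 2 * |(h z).re| := by
      rw [← hh', mul_comm, ← le_div_iff₀ hR]
      exact norm_deriv_le_of_re_neg hR hd hre
    _ ≤ 2 * ‖h z‖ := by gcongr; exact Complex.abs_re_le_norm _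
    _ = 2 * ‖c‖ * ‖L (deriv f z)‖ := by rw [hhz, norm_neg, norm_mul, mul_assoc]
  exact le_of_mul_le_mul_right hschwarz hLpos

theorem exists_add_smul_mem_frontier (hDb : Bornology.IsBounded D) (hx : x ∈ D) (hv : v ≠ 0) :
    ∃ c : ℂ, x + c • v ∈ frontier D := by
  by_contra! hline
  have hline_subset : range (fun c : ℂ => x + c • v) ⊆ D :=
    subset_of_isPreconnected_of_disjoint_frontier (isPreconnected_range (by fun_prop))
      ⟨x, ⟨0, by simp⟩, hx⟩ (disjoint_left.2 (forall_mem_range.2 hline))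
  obtain ⟨R, hR⟩ := hDb.subset_closedBall x
  obtain ⟨c, hc⟩ := NormedField.exists_lt_norm ℂ (R / ‖v‖)
  have hcR : ‖c‖ * ‖v‖ ≤ R := by
    simpa [norm_smul] using hR (hline_subset (mem_range_self c))
  exact hcR.not_gt ((div_lt_iff₀ (norm_pos_iff.2 hv)).1 hc)

theorem frontier_inter_line_nonempty (hne : ∃ c : ℂ, x + c • v ∈ frontier D) :
    (frontier D ∩ {w | ∃ c : ℂ, w = x + c • v}).Nonempty :=
  hne.elim fun c hc => ⟨_, hc, c, rfl⟩

theorem bdistDir_le {c : ℂ} (hc : x + c • v ∈ frontier D) : bdistDir D x v ≤ ‖c‖ * ‖v‖ := by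
  rw [← norm_smul, ← dist_self_add_right (c • v) x]
  exact infDist_le_dist_of_mem ⟨hc, c, rfl⟩

theorem le_bdistDir {r : ℝ} (hne : ∃ c : ℂ, x + c • v ∈ frontier D)
    (h : ∀ c : ℂ, x + c • v ∈ frontier D → r ≤ ‖c‖ * ‖v‖) : r ≤ bdistDir D x v := by
  rw [bdistDir, le_infDist (frontier_inter_line_nonempty hne)]
  rintro _ ⟨hp, c, rfl⟩
  rw [dist_self_add_right, norm_smul]
  exact h c hp

theorem bdistDir_pos (hDo : IsOpen D) (hx : x ∈ D) (hne : ∃ c : ℂ, x + c • v ∈ frontier D) :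
    0 < bdistDir D x v := by
  refine (infDist_pos_iff_notMem_closure (frontier_inter_line_nonempty hne)).1 fun hcl => ?_
  have hfr : x ∈ frontier D := closure_minimal inter_subset_left isClosed_frontier hcl
  exact disjoint_left.1 (disjoint_frontier_iff_isOpen.2 hDo) hfr hx

theorem add_smul_mem_of_norm_mul_lt_bdistDir (hx : x ∈ D) {c : ℂ}
    (hc : ‖c‖ * ‖v‖ < bdistDir D x v) : x + c • v ∈ D := by
  have hconn : IsPreconnected ((fun a : ℂ => x + a • v) '' closedBall 0 ‖c‖) :=
    (convex_closedBall (0 : ℂ) ‖c‖).isPreconnected.image _ (by fun_prop)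
  have hdisj : Disjoint ((fun a : ℂ => x + a • v) '' closedBall 0 ‖c‖) (frontier D) := by
    refine disjoint_left.2 (forall_mem_image.2 fun a ha hfr => (bdistDir_le hfr).not_gt ?_)
    refine lt_of_le_of_lt ?_ hc
    gcongr
    exact mem_closedBall_zero_iff.1 ha
  exact subset_of_isPreconnected_of_disjoint_frontier hconn
    ⟨x, ⟨0, mem_closedBall_self (norm_nonneg c), by simp⟩, hx⟩ hdisj
    (mem_image_of_mem _ (mem_closedBall_zero_iff.2 le_rfl))

/-- `f` is a holomorphic disc in `D` through `f 0 = x` with `ξ • f'(0) = v`, a competitor of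
cost `‖ξ‖` in the definition of `kobMetric D x v`. The unrestricted derivative is used, since it
agrees with the one within the unit disc at `0`. -/
structure IsKobDisc (D : Set E) (x v : E) (f : ℂ → E) (ξ : ℂ) : Prop where
  differentiableOn : DifferentiableOn ℂ f (ball 0 1)
  mapsTo : MapsTo f (ball 0 1) D
  map_zero : f 0 = x
  smul_deriv : ξ • deriv f 0 = v

theorem kobMetric_eq_sInf :
    kobMetric D x v = sInf {r : ℝ | ∃ (f : ℂ → E) (ξ : ℂ), IsKobDisc D x v f ξ ∧ r = ‖ξ‖} := by
  have hderiv (f : ℂ → E) : derivWithin f (ball (0 : ℂ) 1) 0 = deriv f 0 :=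
    derivWithin_of_isOpen isOpen_ball (mem_ball_self one_pos)
  simp only [kobMetric, hderiv]
  refine congrArg sInf (Set.ext fun r => exists₂_congr fun f ξ => ?_)
  exact ⟨fun ⟨hf, hfD, hf0, hfv, hr⟩ => ⟨⟨hf, hfD, hf0, hfv⟩, hr⟩,
    fun ⟨⟨hf, hfD, hf0, hfv⟩, hr⟩ => ⟨hf, hfD, hf0, hfv, hr⟩⟩

theorem IsKobDisc.kobMetric_le {f : ℂ → E} {ξ : ℂ} (h : IsKobDisc D x v f ξ) :
    kobMetric D x v ≤ ‖ξ‖ := by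
  rw [kobMetric_eq_sInf]
  refine csInf_le ⟨0, ?_⟩ ⟨f, ξ, h, rfl⟩
  rintro _ ⟨-, η, -, rfl⟩
  exact norm_nonneg η

theorem IsKobDisc.le_kobMetric {f : ℂ → E} {ξ : ℂ} (h : IsKobDisc D x v f ξ) {r : ℝ}
    (hr : ∀ (g : ℂ → E) (η : ℂ), IsKobDisc D x v g η → r ≤ ‖η‖) : r ≤ kobMetric D x v := by
  rw [kobMetric_eq_sInf]
  refine le_csInf ⟨_, f, ξ, h, rfl⟩ ?_
  rintro _ ⟨g, η, hg, rfl⟩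
  exact hr g η hg

theorem isKobDisc_add_mul_smul {a : ℂ} (ha : a ≠ 0)
    (h : ∀ z ∈ ball (0 : ℂ) 1, x + (z * a) • v ∈ D) :
    IsKobDisc D x v (fun z => x + (z * a) • v) a⁻¹ where
  differentiableOn := by fun_prop
  mapsTo := h
  map_zero := by simp
  smul_deriv := by
    have hderiv : HasDerivAt (fun z : ℂ => x + (z * a) • v) (a • v) 0 := by
      simpa using (((hasDerivAt_id (0 : ℂ)).mul_const a).smul_const v).const_add x
    rw [hderiv.deriv, inv_smul_smul₀ ha]

theorem exists_isKobDisc_norm_eq (hDo : IsOpen D) (hx : x ∈ D)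
    (hne : ∃ c : ℂ, x + c • v ∈ frontier D) :
    ∃ (f : ℂ → E) (ξ : ℂ), IsKobDisc D x v f ξ ∧ ‖ξ‖ = ‖v‖ / bdistDir D x v := by
  have hδ : 0 < bdistDir D x v := bdistDir_pos hDo hx hne
  have hv : 0 < ‖v‖ := by
    obtain ⟨c, hc⟩ := hne
    exact pos_of_mul_pos_right (hδ.trans_le (bdistDir_le hc)) (norm_nonneg c)
  let a : ℂ := (bdistDir D x v / ‖v‖ : ℝ)
  have hnorm : ‖a‖ = bdistDir D x v / ‖v‖ := Complex.norm_of_nonneg (div_pos hδ hv).le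
  have ha : a ≠ 0 := norm_pos_iff.1 (hnorm ▸ div_pos hδ hv)
  refine ⟨_, a⁻¹, isKobDisc_add_mul_smul ha fun z hz => ?_, by rw [norm_inv, hnorm, inv_div]⟩
  apply add_smul_mem_of_norm_mul_lt_bdistDir hx
  calc ‖z * a‖ * ‖v‖ = ‖z‖ * bdistDir D x v := by
        rw [norm_mul, hnorm, mul_assoc, div_mul_cancel₀ _ hv.ne']
    _ < bdistDir D x v := mul_lt_of_lt_one_left hδ (mem_ball_zero_iff.1 hz)

theorem IsKobDisc.norm_div_two_mul_bdistDir_le (hDo : IsOpen D) (hDc : Convex ℝ D)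
    (hne : ∃ c : ℂ, x + c • v ∈ frontier D) {f : ℂ → E} {ξ : ℂ} (h : IsKobDisc D x v f ξ) :
    ‖v‖ / (2 * bdistDir D x v) ≤ ‖ξ‖ := by
  have hx : x ∈ D := h.map_zero ▸ h.mapsTo (mem_ball_self one_pos)
  have hcost : ∀ c : ℂ, x + c • v ∈ frontier D → 1 ≤ 2 * (‖c‖ * ‖ξ‖) := by
    intro c hcfr
    rw [← norm_mul]
    refine le_two_mul_norm_of_add_smul_deriv_notMem hDo hDc one_pos h.differentiableOn h.mapsTo ?_
    rw [h.map_zero, mul_smul, h.smul_deriv]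
    exact disjoint_left.1 (disjoint_frontier_iff_isOpen.2 hDo) hcfr
  have hξ : 0 < ‖ξ‖ := by
    obtain ⟨c, hcfr⟩ := hne
    exact pos_of_mul_pos_right (by linarith [hcost c hcfr]) (norm_nonneg c)
  have hδ : ‖v‖ / 2 / ‖ξ‖ ≤ bdistDir D x v := by
    refine le_bdistDir hne fun c hcfr => ?_
    rw [div_div, div_le_iff₀ (by positivity)]
    calc ‖v‖ ≤ 2 * (‖c‖ * ‖ξ‖) * ‖v‖ := le_mul_of_one_le_left (norm_nonneg v) (hcost c hcfr)
      _ = ‖c‖ * ‖v‖ * (2 * ‖ξ‖) := by ring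
  rw [← div_div]
  exact (div_le_comm₀ hξ (bdistDir_pos hDo hx hne)).1 hδ

theorem statement_11_general (hDo : IsOpen D) (hDc : Convex ℝ D) (hx : x ∈ D)
    (hne : ∃ c : ℂ, x + c • v ∈ frontier D) :
    ‖v‖ / (2 * bdistDir D x v) ≤ kobMetric D x v ∧
    kobMetric D x v ≤ ‖v‖ / bdistDir D x v := by
  obtain ⟨f, ξ, hf, hξ⟩ := exists_isKobDisc_norm_eq hDo hx hne
  exact ⟨hf.le_kobMetric fun _ _ hg => hg.norm_div_two_mul_bdistDir_le hDo hDc hne,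
    hf.kobMetric_le.trans_eq hξ⟩

end

theorem statement_11 {n : ℕ}
    (Ω : Set (EuclideanSpace ℂ (Fin n)))
    (hΩo : IsOpen Ω) (hne : Ω.Nonempty) (hΩb : Bornology.IsBounded Ω)
    (hconv : Convex ℝ Ω)
    (x : EuclideanSpace ℂ (Fin n)) (hx : x ∈ Ω) (v : EuclideanSpace ℂ (Fin n)) (hv : v ≠ 0) :
    ‖v‖ / (2 * bdistDir Ω x v) ≤ kobMetric Ω x v ∧
    kobMetric Ω x v ≤ ‖v‖ / bdistDir Ω x v :=
  statement_11_general hΩo hconv hx (exists_add_smul_mem_frontier hΩb hx hv)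
end

section
/- Let Ω ⊂ ℂⁿ be a bounded domain. Then for every κ > 0 and all x, y ∈ Ω, there exists a (1,κ)-almost geodesic σ : [a,b] → Ω with σ(a) = x and σ(b) = y. -/
open Metric Set MeasureTheory Filter Topology

/-! The Kobayashi metric of an open set `D` is upper semicontinuous on `D × E`: a disc through `x`,
rescaled so that its closure stays in `D`, can be perturbed to a disc through any nearby point in
any nearby direction. It is also bounded by a multiple of the norm near a compact set, so the speed
of an absolutely continuous curve in `D` is integrable. Take a curve from `x` to `y` of length less
than `K_D(x, y) + κ`; reparametrising it by the primitive of its speed plus a small constant gives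
a curve with speed at most `1` on an interval `[0, T]` with `T ≤ K_D(x, y) + κ`. Its arcs from
`σ s` to `σ t` have length at most `|t - s|`, and the triangle inequality through `σ s` and `σ t`
turns the bound on `T` into `|t - s| - κ ≤ K_D(σ s, σ t)`. -/

section KobayashiMetric

open scoped Pointwise

variable {E : Type*} [NormedAddCommGroup E] [NormedSpace ℂ E] {D : Set E} {x v : E} {α r : ℝ}

/-- The set of norms `‖ξ‖` over which the infimum defining the Kobayashi metric `k_D(x; v)` is
taken. The derivative at `0` is taken in `ℂ` rather than within the unit disc. -/
def kobayashiRadii (D : Set E) (x v : E) : Set ℝ :=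
  {r | ∃ (f : ℂ → E) (ξ : ℂ), DifferentiableOn ℂ f (ball 0 1) ∧ MapsTo f (ball 0 1) D ∧
    f 0 = x ∧ ξ • deriv f 0 = v ∧ r = ‖ξ‖}

theorem kobMetric_eq_sInf_kobayashiRadii (D : Set E) (x v : E) :
    kobMetric D x v = sInf (kobayashiRadii D x v) := by
  simp only [kobMetric, kobayashiRadii, derivWithin_of_mem_nhds (ball_mem_nhds (0 : ℂ) one_pos)]

theorem nonneg_of_mem_kobayashiRadii (hr : r ∈ kobayashiRadii D x v) : 0 ≤ r := by
  obtain ⟨f, ξ, -, -, -, -, rfl⟩ := hr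
  exact norm_nonneg ξ

theorem kobMetric_nonneg (D : Set E) (x v : E) : 0 ≤ kobMetric D x v := by
  rw [kobMetric_eq_sInf_kobayashiRadii]
  exact Real.sInf_nonneg fun _ => nonneg_of_mem_kobayashiRadii

theorem kobMetric_le_of_mem_kobayashiRadii (hr : r ∈ kobayashiRadii D x v) :
    kobMetric D x v ≤ r := by
  rw [kobMetric_eq_sInf_kobayashiRadii]
  exact csInf_le ⟨0, fun _ => nonneg_of_mem_kobayashiRadii⟩ hr

theorem kobMetric_zero (D : Set E) (x : E) : kobMetric D x 0 = 0 := by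
  refine le_antisymm ?_ (kobMetric_nonneg D x 0)
  rcases (kobayashiRadii D x 0).eq_empty_or_nonempty with hempty | ⟨_, f, _, hf, hfD, hfx, -⟩
  · rw [kobMetric_eq_sInf_kobayashiRadii, hempty, Real.sInf_empty]
  · exact kobMetric_le_of_mem_kobayashiRadii ⟨f, 0, hf, hfD, hfx, zero_smul _ _, norm_zero.symm⟩

theorem kobayashiRadii_smul (D : Set E) (x v : E) {c : ℂ} (hc : c ≠ 0) :
    kobayashiRadii D x (c • v) = ‖c‖ • kobayashiRadii D x v := by
  ext r
  rw [mem_smul_set]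
  constructor
  · rintro ⟨f, ξ, hf, hfD, hfx, hfv, rfl⟩
    refine ⟨‖c⁻¹ * ξ‖, ⟨f, c⁻¹ * ξ, hf, hfD, hfx, ?_, rfl⟩, ?_⟩
    · rw [mul_smul, hfv, inv_smul_smul₀ hc]
    · rw [smul_eq_mul, ← norm_mul, mul_inv_cancel_left₀ hc]
  · rintro ⟨_, ⟨f, ξ, hf, hfD, hfx, rfl, rfl⟩, rfl⟩
    exact ⟨f, c * ξ, hf, hfD, hfx, mul_smul _ _ _, (norm_mul _ _).symm⟩

theorem kobMetric_smul (D : Set E) (x v : E) (c : ℂ) :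
    kobMetric D x (c • v) = ‖c‖ * kobMetric D x v := by
  rcases eq_or_ne c 0 with rfl | hc
  · simp [kobMetric_zero]
  · rw [kobMetric_eq_sInf_kobayashiRadii, kobayashiRadii_smul D x v hc,
      Real.sInf_smul_of_nonneg (norm_nonneg c), smul_eq_mul, kobMetric_eq_sInf_kobayashiRadii]

theorem kobMetric_neg (D : Set E) (x v : E) : kobMetric D x (-v) = kobMetric D x v := by
  simpa using kobMetric_smul D x v (-1)

theorem norm_div_mem_kobayashiRadii (v : E) (hr : 0 < r) (hball : ball x r ⊆ D) :
    ‖v‖ / r ∈ kobayashiRadii D x v := by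
  set c : ℂ := ((‖v‖ / r : ℝ) : ℂ) with hc
  have hcnorm : ‖c‖ = ‖v‖ / r := Complex.norm_of_nonneg (by positivity)
  have hderiv (z : ℂ) : HasDerivAt (fun z : ℂ => x + z • c⁻¹ • v) (c⁻¹ • v) z := by
    simpa using ((hasDerivAt_id z).smul_const (c⁻¹ • v)).const_add x
  have hnorm : ‖c⁻¹ • v‖ ≤ r := by
    rw [norm_smul, norm_inv, hcnorm, inv_div, div_mul_eq_mul_div]
    exact div_le_of_le_mul₀ (norm_nonneg v) hr.le le_rfl
  refine ⟨fun z => x + z • c⁻¹ • v, c,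
    fun z _ => (hderiv z).differentiableAt.differentiableWithinAt,
    fun z hz => hball ?_, by simp, ?_, hcnorm.symm⟩
  · rw [mem_ball_zero_iff] at hz
    calc dist (x + z • c⁻¹ • v) x = ‖z‖ * ‖c⁻¹ • v‖ := by
          rw [dist_eq_norm, add_sub_cancel_left, norm_smul]
      _ ≤ ‖z‖ * r := by gcongr
      _ < r := mul_lt_of_lt_one_left hr hz
  · rw [(hderiv 0).deriv]
    rcases eq_or_ne v 0 with rfl | hv
    · simp
    · exact smul_inv_smul₀ (norm_ne_zero_iff.1 (hcnorm ▸ (by positivity))) v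

theorem kobMetric_le_norm_div (v : E) (hr : 0 < r) (hball : ball x r ⊆ D) :
    kobMetric D x v ≤ ‖v‖ / r :=
  kobMetric_le_of_mem_kobayashiRadii (norm_div_mem_kobayashiRadii v hr hball)

theorem exists_diffContOnCl_disc_of_kobMetric_lt (hD : IsOpen D) (hx : x ∈ D)
    (hα : kobMetric D x v < α) :
    ∃ f : ℂ → E, DiffContOnCl ℂ f (ball 0 1) ∧ MapsTo f (closedBall 0 1) D ∧ f 0 = x ∧
      (α : ℂ) • deriv f 0 = v := by
  have hα₀ : 0 < α := (kobMetric_nonneg D x v).trans_lt hα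
  obtain ⟨r, hr, hball⟩ := Metric.isOpen_iff.1 hD x hx
  rw [kobMetric_eq_sInf_kobayashiRadii] at hα
  obtain ⟨_, ⟨f, ξ, hf, hfD, hfx, hfv, rfl⟩, hξ⟩ :=
    exists_lt_of_csInf_lt ⟨_, norm_div_mem_kobayashiRadii v hr hball⟩ hα
  have hmaps : MapsTo (fun z : ℂ => ξ / α * z) (closedBall 0 1) (ball 0 1) := by
    intro z hz
    rw [mem_closedBall_zero_iff] at hz
    rw [mem_ball_zero_iff, norm_mul, norm_div, Complex.norm_of_nonneg hα₀.le]
    exact (mul_le_of_le_one_right (by positivity) hz).trans_lt ((div_lt_one hα₀).2 hξ)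
  refine ⟨fun z => f (ξ / α * z), ?_, hfD.comp hmaps, by simpa using hfx, ?_⟩
  · exact DifferentiableOn.diffContOnCl_ball
      (hf.comp (t := ball 0 1) (by fun_prop) (mapsTo_preimage _ _)) hmaps
  · rw [deriv_comp_mul_left (ξ / α) f 0, mul_zero, smul_smul,
      mul_div_cancel₀ _ (by exact_mod_cast hα₀.ne'), hfv]

theorem exists_kobMetric_add_le (hD : IsOpen D) {f : ℂ → E} (hf : DiffContOnCl ℂ f (ball 0 1))
    (hfD : MapsTo f (closedBall 0 1) D) :
    ∃ δ > 0, ∀ u w : E, ‖u‖ + ‖w‖ < δ → ∀ ξ : ℂ,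
      kobMetric D (f 0 + u) (ξ • (deriv f 0 + w)) ≤ ‖ξ‖ := by
  obtain ⟨δ, hδ, hthick⟩ := ((isCompact_closedBall (0 : ℂ) 1).image_of_continuousOn
    hf.continuousOn_ball).exists_thickening_subset_open hD hfD.image_subset
  refine ⟨δ, hδ, fun u w huw ξ => kobMetric_le_of_mem_kobayashiRadii
    ⟨fun z => f z + (u + z • w), ξ, ?_, fun z hz => hthick ?_, by simp, ?_, rfl⟩⟩
  · exact hf.differentiableOn.add (by fun_prop)
  · refine mem_thickening_iff.2 ⟨f z, mem_image_of_mem f (ball_subset_closedBall hz), ?_⟩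
    rw [mem_ball_zero_iff] at hz
    calc dist (f z + (u + z • w)) (f z) ≤ ‖u‖ + ‖z‖ * ‖w‖ := by
          rw [dist_eq_norm, add_sub_cancel_left, ← norm_smul]
          exact norm_add_le _ _
      _ ≤ ‖u‖ + ‖w‖ := by gcongr; exact mul_le_of_le_one_left (norm_nonneg w) hz.le
      _ < δ := huw
  · have hf₀ : HasDerivAt f (deriv f 0) 0 :=
      (hf.differentiableAt isOpen_ball (mem_ball_self one_pos)).hasDerivAt
    have hlin : HasDerivAt (fun z : ℂ => u + z • w) w 0 := by
      simpa using ((hasDerivAt_id (0 : ℂ)).smul_const w).const_add u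
    rw [(hf₀.fun_add hlin).deriv]

theorem upperSemicontinuousOn_kobMetric (hD : IsOpen D) :
    UpperSemicontinuousOn (fun p : E × E => kobMetric D p.1 p.2) (D ×ˢ univ) := by
  rintro ⟨x, v⟩ ⟨hx, -⟩ α hα
  obtain ⟨β, hβ, hβα⟩ := exists_between hα
  have hβ₀ : 0 < β := (kobMetric_nonneg D x v).trans_lt hβ
  have hβne : (β : ℂ) ≠ 0 := by exact_mod_cast hβ₀.ne'
  obtain ⟨f, hf, hfD, rfl, rfl⟩ := exists_diffContOnCl_disc_of_kobMetric_lt hD hx hβ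
  obtain ⟨δ, hδ, hle⟩ := exists_kobMetric_add_le hD hf hfD
  have hcont : Continuous fun p : E × E =>
      ‖p.1 - f 0‖ + ‖(β : ℂ)⁻¹ • p.2 - deriv f 0‖ := by fun_prop
  have hnear : ∀ᶠ p : E × E in 𝓝 (f 0, (β : ℂ) • deriv f 0),
      ‖p.1 - f 0‖ + ‖(β : ℂ)⁻¹ • p.2 - deriv f 0‖ < δ :=
    hcont.continuousAt.eventually_lt continuousAt_const
      (by simpa only [inv_smul_smul₀ hβne, sub_self, norm_zero, zero_add] using hδ)
  filter_upwards [nhdsWithin_le_nhds hnear] with p hp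
  calc kobMetric D p.1 p.2
      = kobMetric D (f 0 + (p.1 - f 0))
          ((β : ℂ) • (deriv f 0 + ((β : ℂ)⁻¹ • p.2 - deriv f 0))) := by
        rw [add_sub_cancel, add_sub_cancel, smul_inv_smul₀ hβne]
    _ ≤ ‖(β : ℂ)‖ := hle _ _ hp _
    _ = β := Complex.norm_of_nonneg hβ₀.le
    _ < α := hβα

end KobayashiMetric

theorem aemeasurable_comp_of_upperSemicontinuousOn {α X β : Type*} [MeasurableSpace α]
    [TopologicalSpace X] [MeasurableSpace X] [OpensMeasurableSpace X]
    [TopologicalSpace β] [LinearOrder β] [OrderTopology β]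
    [SecondCountableTopology β] [MeasurableSpace β] [BorelSpace β]
    {μ : Measure α} {f : X → β} {s : Set X} {φ : α → X} (hf : UpperSemicontinuousOn f s)
    (hs : MeasurableSet s) (hφ : AEMeasurable φ μ) (hφs : ∀ᵐ t ∂μ, φ t ∈ s) :
    AEMeasurable (fun t => f (φ t)) μ := by
  have hmem : ∀ᵐ p ∂μ.map φ, p ∈ s := (ae_map_iff hφ hs).2 hφs
  have hfm : AEMeasurable f (μ.map φ) := by
    rw [← Measure.restrict_eq_self_of_ae_mem hmem]
    exact aemeasurable_restrict_of_measurable_subtype hs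
      (upperSemicontinuousOn_iff_restrict.2 hf).measurable
  exact hfm.comp_aemeasurable hφ

section TimeChange

variable {h : ℝ → ℝ} {ε : ℝ}

theorem exists_orderIso_integral_eq_sub (hint : LocallyIntegrable h) (hε : 0 < ε)
    (hle : ∀ t, ε ≤ h t) (a : ℝ) :
    ∃ H : ℝ ≃o ℝ, H a = 0 ∧ ∀ s t, ∫ r in s..t, h r = H t - H s := by
  have hint' (s t : ℝ) : IntervalIntegrable h volume s t :=
    (hint.integrableOn_isCompact isCompact_uIcc).intervalIntegrable
  set H : ℝ → ℝ := fun t => ∫ r in a..t, h r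
  have hsub (s t : ℝ) : ∫ r in s..t, h r = H t - H s :=
    (intervalIntegral.integral_interval_sub_left (hint' a t) (hint' a s)).symm
  have hgrowth {s t : ℝ} (hst : s ≤ t) : ε * (t - s) ≤ H t - H s := by
    rw [← hsub, mul_comm, ← smul_eq_mul, ← intervalIntegral.integral_const]
    exact intervalIntegral.integral_mono_on hst intervalIntegrable_const (hint' s t)
      fun r _ => hle r
  have hmono : StrictMono H := fun s t hst =>
    sub_pos.1 ((mul_pos hε (sub_pos.2 hst)).trans_le (hgrowth hst.le))
  have htop : Tendsto H atTop atTop := by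
    refine tendsto_atTop_mono' atTop ?_
      (tendsto_atTop_add_const_left _ (H 0) (tendsto_id.const_mul_atTop hε))
    filter_upwards [eventually_ge_atTop 0] with t ht
    have := hgrowth ht
    simp only [id]
    linarith
  have hbot : Tendsto H atBot atBot := by
    refine tendsto_atBot_mono' atBot ?_
      (tendsto_atBot_add_const_left _ (H 0) (tendsto_id.const_mul_atBot hε))
    filter_upwards [eventually_le_atBot 0] with t ht
    have := hgrowth ht
    simp only [id]
    linarith
  have hcont : Continuous H := intervalIntegral.continuous_primitive hint' a
  exact ⟨hmono.orderIsoOfSurjective H (hcont.surjective htop hbot),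
    intervalIntegral.integral_same, hsub⟩

variable {H : ℝ ≃o ℝ}

theorem map_orderIso_withDensity_eq_volume (hint : LocallyIntegrable h) (hnonneg : 0 ≤ h)
    (hH : ∀ s t, ∫ r in s..t, h r = H t - H s) :
    (volume.withDensity fun t => ENNReal.ofReal (h t)).map H = volume := by
  refine (Measure.ext_of_Ioc _ _ fun c d hcd => ?_).symm
  have hle : H.symm c ≤ H.symm d := H.symm.monotone hcd.le
  have hintegral : ∫ t in Ioc (H.symm c) (H.symm d), h t = d - c := by
    rw [← intervalIntegral.integral_of_le hle, hH, H.apply_symm_apply, H.apply_symm_apply]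
  rw [Measure.map_apply H.continuous.measurable measurableSet_Ioc, H.preimage_Ioc,
    withDensity_apply _ measurableSet_Ioc, ← ofReal_integral_eq_lintegral_ofReal
      ((hint.integrableOn_isCompact isCompact_Icc).mono_set Ioc_subset_Icc_self)
      (ae_of_all _ hnonneg), hintegral, Real.volume_Ioc]

variable {F : Type*} [NormedAddCommGroup F] [NormedSpace ℝ F] {s t : ℝ}

theorem intervalIntegrable_orderIso_iff (hint : LocallyIntegrable h) (hnonneg : 0 ≤ h)
    (hH : ∀ s t, ∫ r in s..t, h r = H t - H s) (hst : s ≤ t) (f : ℝ → F) :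
    IntervalIntegrable f volume (H s) (H t) ↔
      IntervalIntegrable (fun r => h r • f (H r)) volume s t := by
  have hemb : MeasurableEmbedding H := H.toHomeomorph.measurableEmbedding
  rw [intervalIntegrable_iff_integrableOn_Ioc_of_le (H.monotone hst),
    intervalIntegrable_iff_integrableOn_Ioc_of_le hst,
    ← map_orderIso_withDensity_eq_volume hint hnonneg hH, hemb.integrableOn_map_iff,
    map_orderIso_withDensity_eq_volume hint hnonneg hH, H.preimage_Ioc, H.symm_apply_apply,
    H.symm_apply_apply, IntegrableOn, restrict_withDensity measurableSet_Ioc,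
    integrable_withDensity_iff_integrable_smul₀'
      hint.aestronglyMeasurable.aemeasurable.restrict.ennreal_ofReal
      (ae_of_all _ fun _ => ENNReal.ofReal_lt_top)]
  simp only [ENNReal.toReal_ofReal (hnonneg _), Function.comp_apply, IntegrableOn]

theorem integral_orderIso (hint : LocallyIntegrable h) (hnonneg : 0 ≤ h)
    (hH : ∀ s t, ∫ r in s..t, h r = H t - H s) (hst : s ≤ t) (f : ℝ → F) :
    ∫ u in H s..H t, f u = ∫ r in s..t, h r • f (H r) := by
  have hemb : MeasurableEmbedding H := H.toHomeomorph.measurableEmbedding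
  rw [intervalIntegral.integral_of_le (H.monotone hst), intervalIntegral.integral_of_le hst,
    ← map_orderIso_withDensity_eq_volume hint hnonneg hH, hemb.setIntegral_map,
    map_orderIso_withDensity_eq_volume hint hnonneg hH, H.preimage_Ioc, H.symm_apply_apply,
    H.symm_apply_apply, setIntegral_withDensity_eq_setIntegral_toReal_smul₀
      hint.aestronglyMeasurable.aemeasurable.restrict.ennreal_ofReal
      (ae_of_all _ fun _ => ENNReal.ofReal_lt_top) _ measurableSet_Ioc]
  simp only [ENNReal.toReal_ofReal (hnonneg _)]

end TimeChange

section AbsolutelyContinuous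

variable {E : Type*} [NormedAddCommGroup E] [NormedSpace ℂ E] {σ τ g k : ℝ → E} {a b c s t : ℝ}

theorem IsACWithDeriv.intervalIntegrable (h : IsACWithDeriv σ g a b) (hs : s ∈ Icc a b)
    (ht : t ∈ Icc a b) : IntervalIntegrable g volume s t :=
  h.1.mono_set (uIcc_subset_uIcc (Icc_subset_uIcc hs) (Icc_subset_uIcc ht))

theorem IsACWithDeriv.integral_eq_sub (h : IsACWithDeriv σ g a b) (hs : s ∈ Icc a b)
    (ht : t ∈ Icc a b) : ∫ r in s..t, g r = σ t - σ s := by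
  have ha : a ∈ Icc a b := left_mem_Icc.2 (hs.1.trans hs.2)
  rw [h.2 t ht, h.2 s hs, add_sub_add_left_eq_sub, intervalIntegral.integral_interval_sub_left
    (h.intervalIntegrable ha ht) (h.intervalIntegrable ha hs)]

theorem isACWithDeriv_of_integral_eq_sub (hg : IntervalIntegrable g volume a b)
    (h : ∀ t ∈ Icc a b, ∫ r in a..t, g r = σ t - σ a) : IsACWithDeriv σ g a b :=
  ⟨hg, fun t ht => by rw [h t ht, add_sub_cancel]⟩

theorem IsACWithDeriv.mono (h : IsACWithDeriv σ g a b) (hs : s ∈ Icc a b) (ht : t ∈ Icc a b) :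
    IsACWithDeriv σ g s t :=
  isACWithDeriv_of_integral_eq_sub (h.intervalIntegrable hs ht) fun _ hr =>
    h.integral_eq_sub hs ⟨hs.1.trans hr.1, hr.2.trans ht.2⟩

theorem IsACWithDeriv.continuousOn (h : IsACWithDeriv σ g a b) : ContinuousOn σ (Icc a b) := by
  have hprim : ContinuousOn (fun t => ∫ r in a..t, g r) (Icc a b) :=
    (intervalIntegral.continuousOn_primitive_interval' h.1 left_mem_uIcc).mono Icc_subset_uIcc
  exact (continuousOn_const.add hprim).congr h.2

theorem IsACWithDeriv.congr (h : IsACWithDeriv σ g a b) (hab : a ≤ b) (hσ : EqOn τ σ (Icc a b))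
    (hg : EqOn k g (Ioc a b)) : IsACWithDeriv τ k a b := by
  have hint {t : ℝ} (ht : t ∈ Icc a b) : EqOn k g (uIoc a t) := by
    rw [uIoc_of_le ht.1]
    exact hg.mono (Ioc_subset_Ioc_right ht.2)
  refine isACWithDeriv_of_integral_eq_sub
    ((intervalIntegrable_congr (hint (right_mem_Icc.2 hab))).2 h.1) fun t ht => ?_
  rw [intervalIntegral.integral_congr_ae (ae_of_all _ (hint ht)), hσ ht, hσ (left_mem_Icc.2 hab)]
  exact h.integral_eq_sub (left_mem_Icc.2 hab) ht

theorem IsACWithDeriv.trans (h : IsACWithDeriv σ g a b) (h' : IsACWithDeriv σ g b c)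
    (hab : a ≤ b) : IsACWithDeriv σ g a c := by
  refine isACWithDeriv_of_integral_eq_sub (h.1.trans h'.1) fun t ht => ?_
  rcases le_total t b with htb | hbt
  · exact h.integral_eq_sub (left_mem_Icc.2 hab) ⟨ht.1, htb⟩
  · have hbc : b ≤ c := hbt.trans ht.2
    rw [← intervalIntegral.integral_add_adjacent_intervals h.1
        (h'.intervalIntegrable (left_mem_Icc.2 hbc) ⟨hbt, ht.2⟩),
      h.integral_eq_sub (left_mem_Icc.2 hab) (right_mem_Icc.2 hab),
      h'.integral_eq_sub (left_mem_Icc.2 hbc) ⟨hbt, ht.2⟩, add_comm, sub_add_sub_cancel]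

theorem IsACWithDeriv.comp_neg (h : IsACWithDeriv σ g a b) (hab : a ≤ b) :
    IsACWithDeriv (fun t => σ (-t)) (fun t => -g (-t)) (-b) (-a) := by
  refine isACWithDeriv_of_integral_eq_sub ((IntervalIntegrable.iff_comp_neg ..).1 h.1).symm.neg
    fun t ht => ?_
  have ht' : -t ∈ Icc a b := ⟨le_neg_of_le_neg ht.2, neg_le_of_neg_le ht.1⟩
  rw [intervalIntegral.integral_neg, intervalIntegral.integral_comp_neg, neg_neg,
    h.integral_eq_sub ht' (right_mem_Icc.2 hab), neg_sub]

theorem IsACWithDeriv.comp_add_right (h : IsACWithDeriv σ g a b) (c : ℝ) :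
    IsACWithDeriv (fun t => σ (t + c)) (fun t => g (t + c)) (a - c) (b - c) := by
  refine isACWithDeriv_of_integral_eq_sub (h.1.comp_add_right c) fun t ht => ?_
  have ht' : t + c ∈ Icc a b := ⟨sub_le_iff_le_add.1 ht.1, le_sub_iff_add_le.1 ht.2⟩
  rw [intervalIntegral.integral_comp_add_right, sub_add_cancel,
    h.integral_eq_sub (left_mem_Icc.2 (ht'.1.trans ht'.2)) ht']

theorem IsACWithDeriv.comp_orderIso_symm {h : ℝ → ℝ} {H : ℝ ≃o ℝ} (hσ : IsACWithDeriv σ g a b)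
    (hab : a ≤ b) (hint : LocallyIntegrable h) (hpos : ∀ t, 0 < h t)
    (hH : ∀ s t, ∫ r in s..t, h r = H t - H s) :
    IsACWithDeriv (fun u => σ (H.symm u)) (fun u => (h (H.symm u))⁻¹ • g (H.symm u))
      (H a) (H b) := by
  have hnonneg : 0 ≤ h := fun t => (hpos t).le
  have hcancel (r : ℝ) : h r • (h (H.symm (H r)))⁻¹ • g (H.symm (H r)) = g r := by
    rw [H.symm_apply_apply, smul_inv_smul₀ (hpos r).ne']
  refine isACWithDeriv_of_integral_eq_sub ?_ fun u hu => ?_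
  · rw [intervalIntegrable_orderIso_iff hint hnonneg hH hab]
    simpa only [hcancel] using hσ.1
  · obtain ⟨t, rfl⟩ := H.surjective u
    have ht : t ∈ Icc a b := ⟨H.le_iff_le.1 hu.1, H.le_iff_le.1 hu.2⟩
    rw [integral_orderIso hint hnonneg hH ht.1, H.symm_apply_apply, H.symm_apply_apply]
    simpa only [hcancel] using hσ.integral_eq_sub (left_mem_Icc.2 hab) ht

theorem isACWithDeriv_lineMap [CompleteSpace E] (x y : E) :
    IsACWithDeriv (AffineMap.lineMap (k := ℝ) x y) (fun _ => y - x) 0 1 :=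
  isACWithDeriv_of_integral_eq_sub intervalIntegrable_const fun t _ => by
    rw [intervalIntegral.integral_const, sub_zero, AffineMap.lineMap_apply_zero,
      AffineMap.lineMap_apply, vadd_eq_add, vsub_eq_sub, add_sub_cancel_right]

end AbsolutelyContinuous

section Length

open scoped Pointwise

variable {E : Type*} [NormedAddCommGroup E] [NormedSpace ℂ E] {D : Set E} {σ τ g k : ℝ → E}
  {x y z : E} {a b c ℓ ℓ' s t T : ℝ}

/-- An absolutely continuous curve `σ : [a, b] → D` with a.e. derivative `g`: the curves over which
the Kobayashi distance is an infimum. -/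
structure IsACCurveIn (D : Set E) (σ g : ℝ → E) (a b : ℝ) : Prop where
  le : a ≤ b
  isACWithDeriv : IsACWithDeriv σ g a b
  mapsTo : MapsTo σ (Icc a b) D

/-- The Kobayashi length of a curve `σ : [a, b] → D` with a.e. derivative `g`. -/
noncomputable def kobLength (D : Set E) (σ g : ℝ → E) (a b : ℝ) : ℝ :=
  ∫ t in a..b, kobMetric D (σ t) (g t)

/-- The Kobayashi lengths of the absolutely continuous curves in `D` from `x` to `y`; the
Kobayashi distance is their infimum. -/
def kobLengths (D : Set E) (x y : E) : Set ℝ :=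
  {ℓ | ∃ (a b : ℝ) (σ g : ℝ → E), IsACCurveIn D σ g a b ∧ σ a = x ∧ σ b = y ∧
    kobLength D σ g a b = ℓ}

theorem kobDist_eq_sInf_kobLengths (D : Set E) (x y : E) :
    kobDist D x y = sInf (kobLengths D x y) := by
  rw [kobDist, kobLengths]
  congr 1
  ext ℓ
  constructor
  · rintro ⟨a, b, σ, g, hab, hσ, hD, hx, hy, rfl⟩
    exact ⟨a, b, σ, g, ⟨hab, hσ, hD⟩, hx, hy, rfl⟩
  · rintro ⟨a, b, σ, g, ⟨hab, hσ, hD⟩, hx, hy, rfl⟩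
    exact ⟨a, b, σ, g, hab, hσ, hD, hx, hy, rfl⟩

theorem kobLength_nonneg (hab : a ≤ b) : 0 ≤ kobLength D σ g a b :=
  intervalIntegral.integral_nonneg hab fun _ _ => kobMetric_nonneg _ _ _

theorem kobLength_congr (hab : a ≤ b) (hσ : EqOn τ σ (Icc a b)) (hg : EqOn k g (Ioc a b)) :
    kobLength D τ k a b = kobLength D σ g a b := by
  refine intervalIntegral.integral_congr_ae (ae_of_all _ fun t ht => ?_)
  rw [uIoc_of_le hab] at ht
  rw [hσ (Ioc_subset_Icc_self ht), hg ht]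

theorem kobLength_comp_neg (D : Set E) (σ g : ℝ → E) (a b : ℝ) :
    kobLength D (fun t => σ (-t)) (fun t => -g (-t)) (-b) (-a) = kobLength D σ g a b := by
  simp only [kobLength, kobMetric_neg]
  rw [intervalIntegral.integral_comp_neg fun t => kobMetric D (σ t) (g t), neg_neg, neg_neg]

theorem kobLength_comp_add_right (D : Set E) (σ g : ℝ → E) (a b c : ℝ) :
    kobLength D (fun t => σ (t + c)) (fun t => g (t + c)) (a - c) (b - c) =
      kobLength D σ g a b := by
  rw [kobLength, intervalIntegral.integral_comp_add_right fun t => kobMetric D (σ t) (g t),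
    sub_add_cancel, sub_add_cancel, kobLength]

namespace IsACCurveIn

theorem mono (h : IsACCurveIn D σ g a b) (hs : s ∈ Icc a b) (ht : t ∈ Icc a b) (hst : s ≤ t) :
    IsACCurveIn D σ g s t :=
  ⟨hst, h.isACWithDeriv.mono hs ht, h.mapsTo.mono_left (Icc_subset_Icc hs.1 ht.2)⟩

theorem congr (h : IsACCurveIn D σ g a b) (hσ : EqOn τ σ (Icc a b)) (hg : EqOn k g (Ioc a b)) :
    IsACCurveIn D τ k a b :=
  ⟨h.le, h.isACWithDeriv.congr h.le hσ hg, h.mapsTo.congr hσ.symm⟩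

theorem trans (h : IsACCurveIn D σ g a b) (h' : IsACCurveIn D σ g b c) :
    IsACCurveIn D σ g a c :=
  ⟨h.le.trans h'.le, h.isACWithDeriv.trans h'.isACWithDeriv h.le,
    Icc_union_Icc_eq_Icc h.le h'.le ▸ h.mapsTo.union h'.mapsTo⟩

theorem comp_neg (h : IsACCurveIn D σ g a b) :
    IsACCurveIn D (fun t => σ (-t)) (fun t => -g (-t)) (-b) (-a) :=
  ⟨neg_le_neg h.le, h.isACWithDeriv.comp_neg h.le,
    fun _ ht => h.mapsTo ⟨le_neg_of_le_neg ht.2, neg_le_of_neg_le ht.1⟩⟩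

theorem comp_add_right (h : IsACCurveIn D σ g a b) (c : ℝ) :
    IsACCurveIn D (fun t => σ (t + c)) (fun t => g (t + c)) (a - c) (b - c) :=
  ⟨sub_le_sub_right h.le c, h.isACWithDeriv.comp_add_right c,
    fun _ ht => h.mapsTo ⟨sub_le_iff_le_add.1 ht.1, le_sub_iff_add_le.1 ht.2⟩⟩

theorem kobLength_mem_kobLengths (h : IsACCurveIn D σ g a b) :
    kobLength D σ g a b ∈ kobLengths D (σ a) (σ b) :=
  ⟨a, b, σ, g, h, rfl, rfl, rfl⟩

theorem aemeasurable_kobMetric (hD : IsOpen D) (h : IsACCurveIn D σ g a b) :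
    AEMeasurable (fun t => kobMetric D (σ t) (g t)) (volume.restrict (Ioc a b)) := by
  borelize (E × E)
  have hσ : AEStronglyMeasurable σ (volume.restrict (Ioc a b)) :=
    (h.isACWithDeriv.continuousOn.aestronglyMeasurable measurableSet_Icc).mono_set
      Ioc_subset_Icc_self
  refine aemeasurable_comp_of_upperSemicontinuousOn
    (f := fun p : E × E => kobMetric D p.1 p.2) (upperSemicontinuousOn_kobMetric hD)
    (hD.prod isOpen_univ).measurableSet
    (hσ.prodMk h.isACWithDeriv.1.1.aestronglyMeasurable).aemeasurable ?_
  filter_upwards [ae_restrict_mem measurableSet_Ioc] with t ht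
  exact ⟨h.mapsTo (Ioc_subset_Icc_self ht), mem_univ _⟩

theorem intervalIntegrable_kobMetric (hD : IsOpen D) (h : IsACCurveIn D σ g a b) :
    IntervalIntegrable (fun t => kobMetric D (σ t) (g t)) volume a b := by
  obtain ⟨δ, hδ, hthick⟩ := (isCompact_Icc.image_of_continuousOn
    h.isACWithDeriv.continuousOn).exists_thickening_subset_open hD h.mapsTo.image_subset
  rw [intervalIntegrable_iff_integrableOn_Ioc_of_le h.le]
  refine (h.isACWithDeriv.1.1.norm.div_const δ).mono'
    (h.aemeasurable_kobMetric hD).aestronglyMeasurable ?_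
  filter_upwards [ae_restrict_mem measurableSet_Ioc] with t ht
  rw [Real.norm_of_nonneg (kobMetric_nonneg _ _ _)]
  exact kobMetric_le_norm_div (g t) hδ
    ((ball_subset_thickening (mem_image_of_mem σ (Ioc_subset_Icc_self ht)) δ).trans hthick)

theorem kobLength_add (hD : IsOpen D) (h : IsACCurveIn D σ g a b) (h' : IsACCurveIn D σ g b c) :
    kobLength D σ g a b + kobLength D σ g b c = kobLength D σ g a c :=
  intervalIntegral.integral_add_adjacent_intervals (h.intervalIntegrable_kobMetric hD)
    (h'.intervalIntegrable_kobMetric hD)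

theorem kobLength_le_sub (h : IsACCurveIn D σ g a b)
    (hunit : ∀ t ∈ Icc a b, kobMetric D (σ t) (g t) ≤ 1) : kobLength D σ g a b ≤ b - a := by
  have hnorm : ∀ t ∈ uIoc a b, ‖kobMetric D (σ t) (g t)‖ ≤ 1 := fun t ht => by
    rw [uIoc_of_le h.le] at ht
    rw [Real.norm_of_nonneg (kobMetric_nonneg _ _ _)]
    exact hunit t (Ioc_subset_Icc_self ht)
  calc kobLength D σ g a b ≤ 1 * |b - a| :=
        (le_abs_self _).trans (intervalIntegral.norm_integral_le_of_norm_le_const hnorm)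
    _ = b - a := by rw [one_mul, abs_of_nonneg (sub_nonneg.2 h.le)]

theorem kobLength_add_mem_kobLengths (hD : IsOpen D) (h : IsACCurveIn D σ g a b)
    (h' : IsACCurveIn D τ k b c) (hb : σ b = τ b) :
    kobLength D σ g a b + kobLength D τ k b c ∈ kobLengths D (σ a) (τ c) := by
  classical
  have hσ : EqOn ((Iic b).piecewise σ τ) σ (Icc a b) :=
    (piecewise_eqOn (Iic b) σ τ).mono Icc_subset_Iic_self
  have hg : EqOn ((Iic b).piecewise g k) g (Ioc a b) :=
    (piecewise_eqOn (Iic b) g k).mono Ioc_subset_Iic_self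
  have hτ : EqOn ((Iic b).piecewise σ τ) τ (Icc b c) := by
    rintro t ⟨hbt, -⟩
    rcases hbt.eq_or_lt with rfl | hbt
    · rwa [piecewise_eq_of_mem _ _ _ self_mem_Iic]
    · exact piecewise_eq_of_notMem _ _ _ (notMem_Iic.2 hbt)
  have hk : EqOn ((Iic b).piecewise g k) k (Ioc b c) := fun t ht =>
    piecewise_eq_of_notMem _ _ _ (notMem_Iic.2 ht.1)
  have hleft := h.congr hσ hg
  have hright := h'.congr hτ hk
  rw [← kobLength_congr h.le hσ hg, ← kobLength_congr h'.le hτ hk, hleft.kobLength_add hD hright,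
    ← hσ (left_mem_Icc.2 h.le), ← hτ (right_mem_Icc.2 h'.le)]
  exact (hleft.trans hright).kobLength_mem_kobLengths

end IsACCurveIn

theorem bddBelow_kobLengths (D : Set E) (x y : E) : BddBelow (kobLengths D x y) := by
  refine ⟨0, ?_⟩
  rintro ℓ ⟨a, b, σ, g, hσ, -, -, rfl⟩
  exact kobLength_nonneg hσ.le

theorem kobDist_le_of_mem_kobLengths (hℓ : ℓ ∈ kobLengths D x y) : kobDist D x y ≤ ℓ := by
  rw [kobDist_eq_sInf_kobLengths]
  exact csInf_le (bddBelow_kobLengths D x y) hℓ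

theorem mem_kobLengths_symm (hℓ : ℓ ∈ kobLengths D x y) : ℓ ∈ kobLengths D y x := by
  obtain ⟨a, b, σ, g, hσ, rfl, rfl, rfl⟩ := hℓ
  rw [← kobLength_comp_neg]
  simpa only [neg_neg] using hσ.comp_neg.kobLength_mem_kobLengths

theorem add_mem_kobLengths (hD : IsOpen D) (hℓ : ℓ ∈ kobLengths D x y)
    (hℓ' : ℓ' ∈ kobLengths D y z) : ℓ + ℓ' ∈ kobLengths D x z := by
  obtain ⟨a, b, σ, g, hσ, rfl, rfl, rfl⟩ := hℓ
  obtain ⟨c, d, τ, k, hτ, hc, rfl, rfl⟩ := hℓ'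
  have hshift := hτ.comp_add_right (c - b)
  rw [← kobLength_comp_add_right D τ k c d (c - b)]
  rw [sub_sub_cancel] at hshift ⊢
  simpa only [sub_add_cancel] using
    hσ.kobLength_add_mem_kobLengths hD hshift (by rw [add_sub_cancel, hc])

theorem kobDist_comm (D : Set E) (x y : E) : kobDist D x y = kobDist D y x := by
  rw [kobDist_eq_sInf_kobLengths, kobDist_eq_sInf_kobLengths]
  exact congrArg sInf (Subset.antisymm (fun _ => mem_kobLengths_symm) fun _ => mem_kobLengths_symm)

theorem IsACCurveIn.kobDist_le_sub (h : IsACCurveIn D σ g a b)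
    (hunit : ∀ t ∈ Icc a b, kobMetric D (σ t) (g t) ≤ 1) (hs : s ∈ Icc a b) (ht : t ∈ Icc a b)
    (hst : s ≤ t) : kobDist D (σ s) (σ t) ≤ t - s :=
  (kobDist_le_of_mem_kobLengths (h.mono hs ht hst).kobLength_mem_kobLengths).trans
    ((h.mono hs ht hst).kobLength_le_sub fun r hr => hunit r ⟨hs.1.trans hr.1, hr.2.trans ht.2⟩)

theorem kobLengths_nonempty_of_segment_subset [CompleteSpace E] (hxy : segment ℝ x y ⊆ D) :
    (kobLengths D x y).Nonempty := by
  have hline : IsACCurveIn D (AffineMap.lineMap (k := ℝ) x y) (fun _ => y - x) 0 1 :=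
    ⟨zero_le_one, isACWithDeriv_lineMap x y, fun t ht =>
      hxy (segment_eq_image_lineMap ℝ x y ▸ mem_image_of_mem _ ht)⟩
  exact ⟨_, by simpa only [AffineMap.lineMap_apply_zero, AffineMap.lineMap_apply_one] using
    hline.kobLength_mem_kobLengths⟩

theorem kobLengths_nonempty [CompleteSpace E] (hD : IsOpen D) (hDc : IsPreconnected D)
    (hx : x ∈ D) (hy : y ∈ D) : (kobLengths D x y).Nonempty := by
  refine hDc.induction₂ (fun x y => (kobLengths D x y).Nonempty) (fun x hx => ?_)
    (fun x y z _ _ _ => ?_) (fun x y _ _ => ?_) hx hy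
  · obtain ⟨r, hr, hball⟩ := Metric.isOpen_iff.1 hD x hx
    filter_upwards [nhdsWithin_le_nhds (ball_mem_nhds x hr)] with y hy
    exact kobLengths_nonempty_of_segment_subset
      (((convex_ball x r).segment_subset (mem_ball_self hr) hy).trans hball)
  · rintro ⟨ℓ, hℓ⟩ ⟨ℓ', hℓ'⟩
    exact ⟨ℓ + ℓ', add_mem_kobLengths hD hℓ hℓ'⟩
  · rintro ⟨ℓ, hℓ⟩
    exact ⟨ℓ, mem_kobLengths_symm hℓ⟩

theorem exists_mem_kobLengths_lt [CompleteSpace E] (hD : IsOpen D) (hDc : IsPreconnected D)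
    (hx : x ∈ D) (hy : y ∈ D) (hℓ : kobDist D x y < ℓ) : ∃ ℓ' ∈ kobLengths D x y, ℓ' < ℓ := by
  rw [kobDist_eq_sInf_kobLengths] at hℓ
  exact exists_lt_of_csInf_lt (kobLengths_nonempty hD hDc hx hy) hℓ

theorem kobDist_triangle [CompleteSpace E] (hD : IsOpen D) (hDc : IsPreconnected D)
    (hx : x ∈ D) (hy : y ∈ D) (hz : z ∈ D) :
    kobDist D x z ≤ kobDist D x y + kobDist D y z := by
  have hsub : kobLengths D x y + kobLengths D y z ⊆ kobLengths D x z := by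
    rintro _ ⟨ℓ, hℓ, ℓ', hℓ', rfl⟩
    exact add_mem_kobLengths hD hℓ hℓ'
  have hxy := kobLengths_nonempty hD hDc hx hy
  have hyz := kobLengths_nonempty hD hDc hy hz
  simp only [kobDist_eq_sInf_kobLengths]
  rw [← csInf_add hxy (bddBelow_kobLengths D x y) hyz (bddBelow_kobLengths D y z)]
  exact csInf_le_csInf (bddBelow_kobLengths D x z) (hxy.add hyz) hsub

end Length

section AlmostGeodesic

variable {E : Type*} [NormedAddCommGroup E] [NormedSpace ℂ E] {D : Set E} {σ g : ℝ → E}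
  {x y : E} {a b ε ℓ κ : ℝ}

theorem IsACCurveIn.exists_locallyIntegrable_kobMetric_le (hD : IsOpen D)
    (hσ : IsACCurveIn D σ g a b) (hε : 0 ≤ ε) :
    ∃ h : ℝ → ℝ, LocallyIntegrable h ∧ (∀ t, ε ≤ h t) ∧
      (∀ t ∈ Icc a b, kobMetric D (σ t) (g t) ≤ h t) ∧
      ∫ t in a..b, h t = kobLength D σ g a b + ε * (b - a) := by
  set speed : ℝ → ℝ := fun t => kobMetric D (σ t) (g t)
  have hint : IntegrableOn speed (Icc a b) :=
    (intervalIntegrable_iff_integrableOn_Icc_of_le hσ.le).1 (hσ.intervalIntegrable_kobMetric hD)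
  have hind : Integrable ((Icc a b).indicator speed) := hint.integrable_indicator measurableSet_Icc
  refine ⟨fun t => (Icc a b).indicator speed t + ε,
    hind.locallyIntegrable.add (locallyIntegrable_const ε), fun t => ?_, fun t ht => ?_, ?_⟩
  · exact le_add_of_nonneg_left (indicator_nonneg (fun _ _ => kobMetric_nonneg _ _ _) t)
  · exact (indicator_of_mem ht speed).ge.trans (le_add_of_nonneg_right hε)
  · rw [intervalIntegral.integral_add hind.intervalIntegrable intervalIntegrable_const,
      intervalIntegral.integral_const, smul_eq_mul, mul_comm, kobLength]
    congr 1
    refine intervalIntegral.integral_congr fun t ht => ?_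
    rw [uIcc_of_le hσ.le] at ht
    exact indicator_of_mem ht speed

theorem IsACCurveIn.exists_reparam_kobMetric_le_one (hD : IsOpen D) (hσ : IsACCurveIn D σ g a b)
    (hℓ : kobLength D σ g a b < ℓ) :
    ∃ (τ k : ℝ → E) (T : ℝ), IsACCurveIn D τ k 0 T ∧ τ 0 = σ a ∧ τ T = σ b ∧ T ≤ ℓ ∧
      ∀ t ∈ Icc 0 T, kobMetric D (τ t) (k t) ≤ 1 := by
  obtain ⟨ε, hε, hεℓ⟩ : ∃ ε > 0, kobLength D σ g a b + ε * (b - a) ≤ ℓ := by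
    have hab : 0 < b - a + 1 := by linarith [hσ.le]
    refine ⟨(ℓ - kobLength D σ g a b) / (b - a + 1), div_pos (sub_pos.2 hℓ) hab, ?_⟩
    rw [div_mul_eq_mul_div, ← le_sub_iff_add_le', div_le_iff₀ hab]
    exact mul_le_mul_of_nonneg_left (by linarith) (sub_pos.2 hℓ).le
  obtain ⟨h, hint, hle, hspeed, hintegral⟩ := hσ.exists_locallyIntegrable_kobMetric_le hD hε.le
  have hpos (t : ℝ) : 0 < h t := hε.trans_le (hle t)
  obtain ⟨H, hHa, hH⟩ := exists_orderIso_integral_eq_sub hint hε hle a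
  have hmaps : MapsTo H.symm (Icc 0 (H b)) (Icc a b) := fun u hu =>
    ⟨H.le_symm_apply.2 (hHa ▸ hu.1), H.symm_apply_le.2 hu.2⟩
  refine ⟨fun u => σ (H.symm u), fun u => (h (H.symm u))⁻¹ • g (H.symm u), H b,
    ⟨hHa ▸ H.monotone hσ.le, ?_, hσ.mapsTo.comp hmaps⟩, ?_, ?_, ?_, fun u hu => ?_⟩
  · rw [← hHa]
    exact hσ.isACWithDeriv.comp_orderIso_symm hσ.le hint hpos hH
  · exact congrArg σ (H.symm_apply_eq.2 hHa.symm)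
  · exact congrArg σ (H.symm_apply_apply b)
  · rwa [← sub_zero (H b), ← hHa, ← hH, hintegral]
  · calc kobMetric D (σ (H.symm u)) ((h (H.symm u))⁻¹ • g (H.symm u))
        = (h (H.symm u))⁻¹ * kobMetric D (σ (H.symm u)) (g (H.symm u)) := by
          rw [← Complex.coe_smul, kobMetric_smul, Complex.norm_of_nonneg (inv_pos.2 (hpos _)).le]
      _ ≤ 1 := inv_mul_le_one_of_le₀ (hspeed _ (hmaps hu)) (hpos _).le

theorem IsACCurveIn.almostGeodesicOn [CompleteSpace E] (hD : IsOpen D) (hDc : IsPreconnected D)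
    (hσ : IsACCurveIn D σ g a b) (hunit : ∀ t ∈ Icc a b, kobMetric D (σ t) (g t) ≤ 1)
    (hκ : 0 ≤ κ) (hlength : b - a ≤ kobDist D (σ a) (σ b) + κ) :
    AlmostGeodesicOn D 1 κ σ g a b := by
  have hbounds {s t : ℝ} (hs : s ∈ Icc a b) (ht : t ∈ Icc a b) (hst : s ≤ t) :
      t - s - κ ≤ kobDist D (σ s) (σ t) ∧ kobDist D (σ s) (σ t) ≤ t - s + κ := by
    have ha : a ∈ Icc a b := left_mem_Icc.2 hσ.le
    have hb : b ∈ Icc a b := right_mem_Icc.2 hσ.le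
    have htri : kobDist D (σ a) (σ b) ≤
        kobDist D (σ a) (σ s) + kobDist D (σ s) (σ t) + kobDist D (σ t) (σ b) :=
      (kobDist_triangle hD hDc (hσ.mapsTo ha) (hσ.mapsTo ht) (hσ.mapsTo hb)).trans <|
        add_le_add_left
          (kobDist_triangle hD hDc (hσ.mapsTo ha) (hσ.mapsTo hs) (hσ.mapsTo ht)) _
    have has := hσ.kobDist_le_sub hunit ha hs hs.1
    have hmid := hσ.kobDist_le_sub hunit hs ht hst
    have htb := hσ.kobDist_le_sub hunit ht hb ht.2
    constructor <;> linarith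
  refine ⟨hσ.mapsTo, hσ.isACWithDeriv, fun s hs t ht => ?_, ae_of_all _ hunit⟩
  rw [div_one, one_mul]
  rcases le_total s t with hst | hts
  · rw [abs_of_nonneg (sub_nonneg.2 hst)]
    exact hbounds hs ht hst
  · rw [abs_sub_comm, abs_of_nonneg (sub_nonneg.2 hts), kobDist_comm]
    exact hbounds ht hs hts

theorem statement_14_general [CompleteSpace E] (hD : IsOpen D) (hDc : IsPreconnected D)
    (hκ : 0 < κ) (hx : x ∈ D) (hy : y ∈ D) :
    ∃ (a b : ℝ) (σ g : ℝ → E), a ≤ b ∧ AlmostGeodesicOn D 1 κ σ g a b ∧ σ a = x ∧ σ b = y := by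
  obtain ⟨_, ⟨a, b, σ, g, hσ, rfl, rfl, rfl⟩, hlt⟩ :=
    exists_mem_kobLengths_lt hD hDc hx hy (lt_add_of_pos_right _ hκ)
  obtain ⟨τ, k, T, hτ, hτ₀, hτT, hT, hunit⟩ := hσ.exists_reparam_kobMetric_le_one hD hlt
  refine ⟨0, T, τ, k, hτ.le, hτ.almostGeodesicOn hD hDc hunit hκ.le ?_, hτ₀, hτT⟩
  rwa [hτ₀, hτT, sub_zero]

end AlmostGeodesic

theorem statement_14 {n : ℕ}
    (Ω : Set (EuclideanSpace ℂ (Fin n)))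
    (hΩo : IsOpen Ω) (hΩc : IsConnected Ω) (hΩb : Bornology.IsBounded Ω)
    (κ : ℝ) (hκ : 0 < κ)
    (x y : EuclideanSpace ℂ (Fin n)) (hx : x ∈ Ω) (hy : y ∈ Ω) :
    ∃ (a b : ℝ) (σ g : ℝ → EuclideanSpace ℂ (Fin n)), a ≤ b ∧
      AlmostGeodesicOn Ω 1 κ σ g a b ∧ σ a = x ∧ σ b = y :=
  statement_14_general hΩo hΩc.isPreconnected hκ hx hy
end
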